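/- Let k be an algebraically closed field and D a k-linear triangulated category with finite-dimensional Hom spaces. Let H0 and H be finite hearts of bounded t-structures on D with H0[1] ≤ H ≤ H0[N-1] for an integer N ≥ 2, and let S be a rigid simple object of H. Then: (1) the simple backward tilt H^♭_S satisfies H0[1] ≤ H^♭_S ≤ H0[N-1] if and only if Hom(S, T) = 0 for every simple object T of H0[1]; (2) the simple forward tilt H^♯_S satisfies H0[1] ≤ H^♯_S ≤ H0[N-1] if and only if Hom(T, S) = 0 for every simple object T of H0[N-1]. -/

import Mathlib

open CategoryTheory Category Limits Pretriangulated ZeroObject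

universe v u

namespace Paper

variable (C : Type u) [Category.{v} C] [HasZeroObject C] [HasShift C ℤ]
  [Preadditive C] [∀ n : ℤ, (shiftFunctor C n).Additive] [Pretriangulated C]

/-- The right perpendicular of a set of objects: objects receiving no nonzero
morphism from the set. -/
def perp (P : Set C) : Set C := {G | ∀ F ∈ P, ∀ f : F ⟶ G, f = 0}

/-- A bounded t-structure on a (pre)triangulated category, given by its aisle `P`. -/
structure TStr where
  P : Set C
  /-- `P` is closed under direct summands (hence under isomorphism). -/
  summand : ∀ (X Y : C) (i : Y ⟶ X) (r : X ⟶ Y), i ≫ r = 𝟙 Y → X ∈ P → Y ∈ P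
  /-- `P[1] ⊆ P`. -/
  shift_mem : ∀ X ∈ P, X⟦(1 : ℤ)⟧ ∈ P
  /-- Every object fits in a triangle `F → E → G → F[1]` with `F ∈ P` and `G ∈ P^⊥`. -/
  exists_triangle : ∀ E : C, ∃ (F G : C) (f : F ⟶ E) (g : E ⟶ G) (h : G ⟶ F⟦(1 : ℤ)⟧),
    F ∈ P ∧ G ∈ perp C P ∧ Triangle.mk f g h ∈ distTriang C
  /-- `M[k] ∈ P` for `k ≫ 0`. -/
  bounded_above : ∀ M : C, ∃ a : ℤ, ∀ j : ℤ, a ≤ j → M⟦j⟧ ∈ P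
  /-- `M[k] ∈ P^⊥` for `k ≪ 0`. -/
  bounded_below : ∀ M : C, ∃ b : ℤ, ∀ j : ℤ, j ≤ b → M⟦j⟧ ∈ perp C P

/-- The heart `H = P^⊥[1] ∩ P` of a bounded t-structure. -/
def heart (T : TStr C) : Set C := {X | X ∈ T.P ∧ X⟦(-1 : ℤ)⟧ ∈ perp C T.P}

/-- The shift `S[m]` of a set of objects. -/
def shiftSet (S : Set C) (m : ℤ) : Set C := {X | X⟦(-m : ℤ)⟧ ∈ S}

/-- An object `P` is a projective of a heart if `Hom(P, M[k]) = 0` for all `k ≠ 0`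
and all `M` in the heart. -/
def IsProjOf (T : TStr C) (P : C) : Prop :=
  ∀ (k : ℤ), k ≠ 0 → ∀ M ∈ heart C T, ∀ f : P ⟶ M⟦k⟧, f = 0

/-- A filtration of an object `M` by triangles with factors in the heart, shifted by a
strictly decreasing sequence of degrees: the canonical filtration associated to a bounded
t-structure. -/
structure HeartFiltration (T : TStr C) (M : C) where
  n : ℕ
  obj : ℕ → C
  deg : ℕ → ℤ
  factor : ℕ → C
  zero : IsZero (obj 0)
  top : obj n ≅ M
  mem : ∀ i, 1 ≤ i → i ≤ n → factor i ∈ heart C T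
  strict : ∀ i j, 1 ≤ i → i < j → j ≤ n → deg j < deg i
  tri : ∀ i, 1 ≤ i → i ≤ n →
    ∃ (f : obj (i - 1) ⟶ obj i) (g : obj i ⟶ (factor i)⟦deg i⟧)
      (h : (factor i)⟦deg i⟧ ⟶ (obj (i - 1))⟦(1 : ℤ)⟧),
      Triangle.mk f g h ∈ distTriang C

variable {C}

open Classical in
/-- The homology `H^k(M)` of `M` with respect to the heart, read off from a
filtration: the factor in degree `k` if there is one, and `0` otherwise. -/
noncomputable def HeartFiltration.homologyAt {T : TStr C} {M : C}
    (F : HeartFiltration C T M) (k : ℤ) : C :=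
  if h : ∃ i, 1 ≤ i ∧ i ≤ F.n ∧ F.deg i = k then F.factor h.choose else 0

variable (C)

/-- A torsion pair `⟨F, T⟩` in the heart of a bounded t-structure: `Hom(T, F) = 0` and
every object of the heart is an extension (triangle) of an `F`-object by a `T`-object. -/
structure TorsionPairIn (T : TStr C) where
  free : Set C
  tor : Set C
  free_sub : free ⊆ heart C T
  tor_sub : tor ⊆ heart C T
  hom_zero : ∀ X ∈ tor, ∀ Y ∈ free, ∀ f : X ⟶ Y, f = 0
  exists_ses : ∀ E ∈ heart C T, ∃ (A B : C) (f : A ⟶ E) (g : E ⟶ B) (h : B ⟶ A⟦(1 : ℤ)⟧),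
    A ∈ tor ∧ B ∈ free ∧ Triangle.mk f g h ∈ distTriang C

/-- The forward tilt `H^♯` of the heart at a torsion pair `⟨free, tor⟩`:
objects `E` with `H^1(E) ∈ F`, `H^0(E) ∈ T` and `H^i(E) = 0` otherwise. -/
def tiltSharpSet (T : TStr C) (free tor : Set C) : Set C :=
  {E | ∀ (F : HeartFiltration C T E) (i : ℕ), 1 ≤ i → i ≤ F.n →
    IsZero (F.factor i) ∨ (F.deg i = 1 ∧ F.factor i ∈ free) ∨
      (F.deg i = 0 ∧ F.factor i ∈ tor)}

/-- The backward tilt `H^♭` of the heart at a torsion pair `⟨free, tor⟩`: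
objects `E` with `H^0(E) ∈ F`, `H^{-1}(E) ∈ T` and `H^i(E) = 0` otherwise. -/
def tiltFlatSet (T : TStr C) (free tor : Set C) : Set C :=
  {E | ∀ (F : HeartFiltration C T E) (i : ℕ), 1 ≤ i → i ≤ F.n →
    IsZero (F.factor i) ∨ (F.deg i = 0 ∧ F.factor i ∈ free) ∨
      (F.deg i = -1 ∧ F.factor i ∈ tor)}

/-- Simple objects of a heart (or of any full subcategory closed under the abelian
structure): nonzero objects which are not the middle term of a nontrivial short exact
sequence (triangle) in the heart. -/
def IsSimpleIn (H : Set C) (X : C) : Prop :=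
  X ∈ H ∧ ¬ IsZero X ∧ ∀ (A B : C) (f : A ⟶ X) (g : X ⟶ B) (h : B ⟶ A⟦(1 : ℤ)⟧),
    A ∈ H → B ∈ H → Triangle.mk f g h ∈ (distTriang C) → IsZero A ∨ IsZero B

/-- A heart is finite if it has finitely many simples up to isomorphism and every object
is a finite iterated extension of simple objects. -/
def FiniteHeart (T : TStr C) : Prop :=
  (∃ (n : ℕ) (S : Fin n → C), (∀ i, IsSimpleIn C (heart C T) (S i)) ∧
    ∀ X, IsSimpleIn C (heart C T) X → ∃ i, Nonempty (X ≅ S i)) ∧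
  ∀ M ∈ heart C T, ∃ (m : ℕ) (obj : ℕ → C), IsZero (obj 0) ∧ Nonempty (obj m ≅ M) ∧
    ∀ i < m, ∃ (s : C) (f : obj i ⟶ obj (i + 1)) (g : obj (i + 1) ⟶ s)
      (h : s ⟶ (obj i)⟦(1 : ℤ)⟧),
      IsSimpleIn C (heart C T) s ∧ Triangle.mk f g h ∈ distTriang C

section Biproducts

variable [HasFiniteBiproducts C]

/-- Finite direct sums of copies of an object `S`. -/
def addObj (S : C) : Set C := {M | ∃ n : ℕ, Nonempty (M ≅ ⨁ (fun _ : Fin n => S))}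

/-- The simple forward tilt `H^♯_S` of the heart at a rigid simple `S`: the forward tilt
at the torsion pair whose free part consists of finite direct sums of copies of `S`. -/
def simpleSharpSet (T : TStr C) (S : C) : Set C :=
  tiltSharpSet C T (addObj C S) {M | M ∈ heart C T ∧ ∀ f : M ⟶ S, f = 0}

/-- The simple backward tilt `H^♭_S` of the heart at a rigid simple `S`: the backward
tilt at the torsion pair whose torsion part consists of finite direct sums of copies
of `S`. -/
def simpleFlatSet (T : TStr C) (S : C) : Set C :=
  tiltFlatSet C T {M | M ∈ heart C T ∧ ∀ f : S ⟶ M, f = 0} (addObj C S)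

end Biproducts

/-
Write `t₀` for the t-structure with heart `H0`, indexed cohomologically, so that `H0[a]` sits in
degree `-a`. By boundedness a heart generates both its aisle and its co-aisle under extensions and
shifts, so `H0[a] ≤ H ≤ H0[b]` says exactly that every object of `H` is `≤ -a` and `≥ -b` for `t₀`.
Each object of `H^♭_S` is an extension of some `A[-1]` and an object of `H`, with `A` a sum of
copies of `S`; hence `H^♭_S ≤ H0[b]` is automatic and `H0[a] ≤ H^♭_S` reduces to a condition on
`S[-1]`, which lies in the aisle of `H^♭_S` because `Hom(S, H^♭_S) = 0`. The condition is that `S`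
be `≤ -a - 1` for `t₀`. As `S` is `≤ -a`, this means that its top truncation, an object of `H0[a]`,
vanishes, i.e. `Hom(S, H0[a]) = 0`, and finite length allows this to be tested on the simple objects
of `H0[a]`. The forward tilt is dual.
-/

open Triangulated

section TStructure

variable {C}
variable (t : TStructure C)

instance (n : ℤ) : (t.le n).IsTriangulatedClosed₂ := .mk' fun D hD h₁ h₃ =>
  (t.isLE₂ D hD n ⟨h₁⟩ ⟨h₃⟩).le

instance (n : ℤ) : (t.ge n).IsTriangulatedClosed₂ := .mk' fun D hD h₁ h₃ =>
  (t.isGE₂ D hD n ⟨h₁⟩ ⟨h₃⟩).ge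

instance (n : ℤ) : (t.le n).ContainsZero :=
  ⟨0, isZero_zero C, t.le_of_isLE 0 n⟩

instance (n : ℤ) : (t.ge n).ContainsZero :=
  ⟨0, isZero_zero C, t.ge_of_isGE 0 n⟩

theorem isLE_truncGE_obj (X : C) (a b : ℤ) (hab : a ≤ b + 1) [t.IsLE X b] :
    t.IsLE ((t.truncGE a).obj X) b := by
  have := t.isLE_truncLT_obj X a (b + 1)
  exact t.isLE₂ _ (rot_of_distTriang _ (t.triangleLTGE_distinguished a X)) b ‹_›
    (t.isLE_shift ((t.truncLT a).obj X) (b + 1) 1 b)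

theorem isGE_truncLT_obj (X : C) (a b : ℤ) (hab : a ≤ b + 1) [t.IsGE X a] :
    t.IsGE ((t.truncLT b).obj X) a := by
  have := t.isGE_truncGE_obj X b (a - 1)
  exact t.isGE₂ _ (inv_rot_of_distTriang _ (t.triangleLTGE_distinguished b X)) a
    (t.isGE_shift ((t.truncGE b).obj X) (a - 1) (-1) a) ‹_›

theorem isLE_of_hom_eq_zero {X : C} (n₀ n₁ : ℤ) (h : n₀ + 1 = n₁) [t.IsLE X n₁]
    (hX : ∀ (M : C) (f : X ⟶ M), t.IsLE M n₁ → t.IsGE M n₁ → f = 0) : t.IsLE X n₀ := by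
  rw [t.isLE_iff_isZero_truncGE_obj n₀ n₁ h, IsZero.iff_id_eq_zero]
  exact t.from_truncGE_obj_ext <| by
    simpa using hX _ ((t.truncGEπ n₁).app X) (isLE_truncGE_obj t X n₁ n₁ (by lia)) inferInstance

theorem isGE_of_hom_eq_zero {X : C} (n₀ n₁ : ℤ) (h : n₀ + 1 = n₁) [t.IsGE X n₀]
    (hX : ∀ (M : C) (f : M ⟶ X), t.IsLE M n₀ → t.IsGE M n₀ → f = 0) : t.IsGE X n₁ := by
  have hLT : t.IsLE ((t.truncLT n₁).obj X) n₀ := t.isLE_truncLT_obj X n₁ n₀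
  rw [t.isGE_iff_isZero_truncLT_obj n₁ X, IsZero.iff_id_eq_zero]
  have := t.isLE_truncLT_obj X n₁ (n₁ - 1)
  exact t.to_truncLT_obj_ext <| by
    simpa using hX _ ((t.truncLTι n₁).app X) hLT (isGE_truncLT_obj t X n₀ n₁ (by lia))

theorem prop_of_isLE_of_isGE (Q : ObjectProperty C) [Q.IsTriangulatedClosed₂] [Q.ContainsZero]
    [Q.IsClosedUnderIsomorphisms] {a b : ℤ}
    (hQ : ∀ (i : ℤ) (M : C), a ≤ i → i ≤ b → t.IsLE M i → t.IsGE M i → Q M)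
    (X : C) [t.IsLE X b] [t.IsGE X a] : Q X := by
  rcases lt_or_ge b a with hba | hab
  · exact Q.prop_of_isZero (t.isZero X b a)
  induction b, hab using Int.leInduction generalizing X with
  | base => exact hQ a X le_rfl le_rfl ‹_› ‹_›
  | succ b hab ih =>
    have hGE : t.IsLE ((t.truncGE (b + 1)).obj X) (b + 1) := isLE_truncGE_obj t X _ _ (by lia)
    have hLE : t.IsLE ((t.truncLT (b + 1)).obj X) b := inferInstance
    have hLT : t.IsGE ((t.truncLT (b + 1)).obj X) a := isGE_truncLT_obj t X a _ (by lia)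
    exact Q.ext_of_isTriangulatedClosed₂ _ (t.triangleLTGE_distinguished (b + 1) X)
      (ih (fun i M hai hib => hQ i M hai (by lia)) ((t.truncLT (b + 1)).obj X))
      (hQ (b + 1) _ (by lia) le_rfl hGE inferInstance)

variable {t}

theorem le_le_iff_heart_le {t₀ : TStructure C} (ht : ∀ X, t.plus X) (n : ℤ) :
    t.le 0 ≤ t₀.le n ↔ t.heart ≤ t₀.le n := by
  refine ⟨fun h => inf_le_left.trans h, fun h X hX => ?_⟩
  obtain ⟨a, _⟩ := ht X
  have : t.IsLE X 0 := ⟨hX⟩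
  refine prop_of_isLE_of_isGE t (a := a) (b := 0) _ (fun i M _ hi _ _ => ?_) X
  have hM : t₀.IsLE (M⟦i⟧) n :=
    ⟨h _ ((t.mem_heart_iff _).2 ⟨t.isLE_shift M i i 0, t.isGE_shift M i i 0⟩)⟩
  have := t₀.isLE_of_shift M (i + n) i n
  exact (t₀.isLE_of_le M (i + n) n).le

theorem ge_le_iff_heart_le {t₀ : TStructure C} (ht : ∀ X, t.minus X) (n : ℤ) :
    t.ge 0 ≤ t₀.ge n ↔ t.heart ≤ t₀.ge n := by
  refine ⟨fun h => inf_le_right.trans h, fun h X hX => ?_⟩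
  obtain ⟨b, _⟩ := ht X
  have : t.IsGE X 0 := ⟨hX⟩
  refine prop_of_isLE_of_isGE t (a := 0) (b := b) _ (fun i M hi _ _ _ => ?_) X
  have hM : t₀.IsGE (M⟦i⟧) n :=
    ⟨h _ ((t.mem_heart_iff _).2 ⟨t.isLE_shift M i i 0, t.isGE_shift M i i 0⟩)⟩
  have := t₀.isGE_of_shift M (i + n) i n
  exact (t₀.isGE_of_ge M n (i + n)).ge

theorem le_le_iff_ge_le_ge {t₀ : TStructure C} (n : ℤ) :
    t₀.le n ≤ t.le 0 ↔ t.ge 0 ≤ t₀.ge n := by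
  constructor
  · intro h X hX
    have : t.IsGE X 0 := ⟨hX⟩
    refine ((t₀.isGE_iff_orthogonal (n - 1) n (by lia) X).2 fun Y f _ => ?_).ge
    have : t.IsLE (Y⟦(-1 : ℤ)⟧) 0 := ⟨h _ (t₀.isLE_shift Y (n - 1) (-1) n).le⟩
    have := t.isLE_of_shift Y (-1) (-1) 0
    exact t.zero f (-1) 0
  · intro h X hX
    have : t₀.IsLE X n := ⟨hX⟩
    refine ((t.isLE_iff_orthogonal 0 1 (by lia) X).2 fun Y f _ => ?_).le
    have : t₀.IsGE (Y⟦(1 : ℤ)⟧) n := ⟨h _ (t.isGE_shift Y 1 1 0).ge⟩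
    have := t₀.isGE_of_shift Y (n + 1) 1 n
    exact t₀.zero f n (n + 1)

end TStructure

namespace TStr

variable {C} (T : TStr C)

/-- The aisle of a t-structure, as a property of objects. -/
def aisle : ObjectProperty C := fun X => X ∈ T.P

theorem aisle_eq_leftOrthogonal : T.aisle = T.aisle.rightOrthogonal.leftOrthogonal := by
  refine le_antisymm (fun X hX G f hG => hG f hX) fun X hX => ?_
  obtain ⟨F, G, f, g, _, hF, hG, hD⟩ := T.exists_triangle X
  obtain ⟨s, hs⟩ := Triangle.coyoneda_exact₂ _ hD (𝟙 X) (hX _ fun Y f hY => hG Y hY f)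
  exact T.summand F X s f hs.symm hF

instance : T.aisle.IsClosedUnderIsomorphisms := T.aisle_eq_leftOrthogonal ▸ inferInstance

theorem rightOrthogonal_aisle_le_shift :
    T.aisle.rightOrthogonal ≤ T.aisle.rightOrthogonal.shift (-1 : ℤ) := by
  intro X hX F f hF
  apply (shiftFunctor C (1 : ℤ)).map_injective
  rw [Functor.map_zero, ← cancel_mono ((shiftFunctorCompIsoId C (-1 : ℤ) 1 (by lia)).app X).hom,
    zero_comp]
  exact hX _ (T.shift_mem F hF)

/-- The Mathlib t-structure with aisle `P`: an object `X` is `≤ n` when `X[n] ∈ P`, and `≥ n`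
when `X[n - 1] ∈ P^⊥`. -/
def toTStructure : TStructure C where
  le n := T.aisle.shift n
  ge n := T.aisle.rightOrthogonal.shift (n - 1)
  le_shift n a n' h X hX := by rwa [← T.aisle.shift_shift a n' n h] at hX
  ge_shift n a n' h X hX := by
    rwa [← T.aisle.rightOrthogonal.shift_shift a (n' - 1) (n - 1) (by lia)] at hX
  zero' X Y f hX hY := by
    rw [T.aisle.shift_zero] at hX
    rw [sub_self, T.aisle.rightOrthogonal.shift_zero] at hY
    exact hY f hX
  le_zero_le := by
    rw [T.aisle.shift_zero]
    exact T.shift_mem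
  ge_one_le := by
    rw [sub_self, zero_sub, T.aisle.rightOrthogonal.shift_zero]
    exact T.rightOrthogonal_aisle_le_shift
  exists_triangle_zero_one E := by
    obtain ⟨F, G, f, g, h, hF, hG, hD⟩ := T.exists_triangle E
    refine ⟨F, G, ?_, ?_, f, g, h, hD⟩
    · rwa [T.aisle.shift_zero]
    · rw [sub_self, T.aisle.rightOrthogonal.shift_zero]
      exact fun Y f hY => hG Y hY f

theorem toTStructure_le_zero : T.toTStructure.le 0 = T.aisle := T.aisle.shift_zero ℤ

theorem mem_P_iff {X : C} : X ∈ T.P ↔ T.toTStructure.IsLE X 0 := by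
  rw [← TStructure.le_iff_isLE, T.toTStructure_le_zero]
  rfl

theorem mem_shiftSet_P_iff {X : C} (m : ℤ) :
    X ∈ shiftSet C T.P m ↔ T.toTStructure.IsLE X (-m) :=
  ⟨fun h => ⟨h⟩, fun h => h.le⟩

theorem mem_heart_iff {X : C} :
    X ∈ heart C T ↔ T.toTStructure.IsLE X 0 ∧ T.toTStructure.IsGE X 0 :=
  and_congr T.mem_P_iff
    ⟨fun h => ⟨fun _ f hF => h _ hF f⟩, fun h _ hF f => h.ge f hF⟩

theorem setOf_heart : {X | T.toTStructure.heart X} = heart C T :=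
  Set.ext fun X => (T.toTStructure.mem_heart_iff X).trans T.mem_heart_iff.symm

theorem mem_shiftSet_heart_iff {X : C} (m : ℤ) :
    X ∈ shiftSet C (heart C T) m ↔
      T.toTStructure.IsLE X (-m) ∧ T.toTStructure.IsGE X (-m) :=
  T.mem_heart_iff.trans (and_congr (T.toTStructure.isLE_shift_iff X (-m) (-m) 0)
    (T.toTStructure.isGE_shift_iff X (-m) (-m) 0))

theorem minus_toTStructure (X : C) : T.toTStructure.minus X :=
  (T.bounded_above X).imp fun a ha => ⟨ha a le_rfl⟩

theorem plus_toTStructure (X : C) : T.toTStructure.plus X := by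
  obtain ⟨b, hb⟩ := T.bounded_below X
  exact ⟨b + 1, ⟨fun F f hF => hb (b + 1 - 1) (by lia) F hF f⟩⟩

theorem shiftSet_P_zero : shiftSet C T.P 0 = T.P := by
  ext X
  rw [T.mem_shiftSet_P_iff, T.mem_P_iff, neg_zero]

variable {T} {T₀ : TStr C} {m : ℤ}

theorem P_subset_shiftSet_iff :
    T.P ⊆ shiftSet C T₀.P m ↔ ∀ X ∈ heart C T, T₀.toTStructure.IsLE X (-m) := by
  have h : T.P ⊆ shiftSet C T₀.P m ↔ T.toTStructure.le 0 ≤ T₀.toTStructure.le (-m) := by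
    rw [T.toTStructure_le_zero]
    rfl
  rw [h, le_le_iff_heart_le T.plus_toTStructure, ← T.setOf_heart]
  exact forall₂_congr fun X _ => T₀.toTStructure.le_iff_isLE X (-m)

theorem shiftSet_subset_P_iff_ge_le_ge :
    shiftSet C T₀.P m ⊆ T.P ↔ T.toTStructure.ge 0 ≤ T₀.toTStructure.ge (-m) := by
  rw [← le_le_iff_ge_le_ge, T.toTStructure_le_zero]
  rfl

theorem shiftSet_subset_P_iff :
    shiftSet C T₀.P m ⊆ T.P ↔ ∀ X ∈ heart C T, T₀.toTStructure.IsGE X (-m) := by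
  rw [shiftSet_subset_P_iff_ge_le_ge, ge_le_iff_heart_le T.minus_toTStructure, ← T.setOf_heart]
  exact forall₂_congr fun X _ => T₀.toTStructure.ge_iff_isGE X (-m)

end TStr

section HeartFiltration

variable {C}

theorem exists_distTriang_of_iso {D : Triangle C} (hD : D ∈ distTriang C) {X₁ X₂ X₃ : C}
    (e₁ : D.obj₁ ≅ X₁) (e₂ : D.obj₂ ≅ X₂) (e₃ : D.obj₃ ≅ X₃) :
    ∃ (f : X₁ ⟶ X₂) (g : X₂ ⟶ X₃) (h : X₃ ⟶ X₁⟦(1 : ℤ)⟧), Triangle.mk f g h ∈ distTriang C :=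
  ⟨_, _, _, isomorphic_distinguished _ hD _ <| Triangle.isoMk _ _ e₁.symm e₂.symm e₃.symm
    (show (e₁.inv ≫ D.mor₁ ≫ e₂.hom) ≫ e₂.inv = e₁.inv ≫ D.mor₁ by simp)
    (show (e₂.inv ≫ D.mor₂ ≫ e₃.hom) ≫ e₃.inv = e₂.inv ≫ D.mor₂ by simp)
    (show (e₃.inv ≫ D.mor₃ ≫ e₁.hom⟦1⟧') ≫ e₁.inv⟦1⟧' = e₃.inv ≫ D.mor₃ by
      simp [← Functor.map_comp])⟩

/-- The iterated truncation `τ_{≤ b-j} ⋯ τ_{≤ b-2} τ_{≤ b-1} X` used to filter an object that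
is `≤ b`: each step splits off one more cohomology object from the top. -/
noncomputable def iterTruncLT (t : TStructure C) (b : ℤ) (X : C) : ℕ → C
  | 0 => X
  | j + 1 => (t.truncLT (b - j)).obj (iterTruncLT t b X j)

variable (t : TStructure C)

theorem isLE_iterTruncLT (b : ℤ) (X : C) [t.IsLE X b] (j : ℕ) :
    t.IsLE (iterTruncLT t b X j) (b - j) := by
  cases j with
  | zero => simpa [iterTruncLT]
  | succ j => exact t.isLE_truncLT_obj _ _ _

theorem isGE_iterTruncLT (a b : ℤ) (X : C) [t.IsGE X a] (j : ℕ) (hj : a + j ≤ b + 1) :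
    t.IsGE (iterTruncLT t b X j) a := by
  induction j with
  | zero => exact ‹t.IsGE X a›
  | succ j ih =>
    have := ih (by lia)
    exact isGE_truncLT_obj t _ a (b - j) (by lia)

theorem nonempty_heartFiltration (T : TStr C) (X : C) : Nonempty (HeartFiltration C T X) := by
  let t := T.toTStructure
  obtain ⟨a, _⟩ := T.plus_toTStructure X
  obtain ⟨n, _⟩ : ∃ n : ℕ, t.IsLE X (a + n - 1) := by
    obtain ⟨b, _⟩ := T.minus_toTStructure X
    exact ⟨(b + 1 - a).toNat, t.isLE_of_le X b _⟩
  let c (i : ℕ) : ℤ := a + n - 1 - (n - i : ℕ)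
  let g (i : ℕ) : C := iterTruncLT t (a + n - 1) X (n - i)
  have hgLE (i : ℕ) : t.IsLE (g i) (c i) := isLE_iterTruncLT t _ X _
  have hgGE (i : ℕ) : t.IsGE (g i) a := isGE_iterTruncLT t a _ X _ (by lia)
  exact ⟨{
    n := n
    obj := g
    deg i := -c i
    factor i := ((t.truncGE (c i)).obj (g i))⟦c i⟧
    zero := t.isZero (g 0) (c 0) a (by lia)
    top := eqToIso (by simp [g, iterTruncLT])
    mem i _ _ := by
      have := isLE_truncGE_obj t (g i) (c i) (c i) (by lia)
      exact T.mem_heart_iff.2 ⟨t.isLE_shift _ (c i) (c i) 0, t.isGE_shift _ (c i) (c i) 0⟩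
    strict i j _ hij hj := by lia
    tri i hi hin := by
      refine exists_distTriang_of_iso (t.triangleLTGE_distinguished (c i) (g i))
        (eqToIso ?_) (Iso.refl _) ((shiftFunctorCompIsoId C (c i) (-c i) (by lia)).app _).symm
      change iterTruncLT t (a + n - 1) X (n - i + 1) = iterTruncLT t (a + n - 1) X (n - (i - 1))
      congr 1
      lia }⟩

theorem HeartFiltration.prop_of_prop_factor {T : TStr C} {X : C} (F : HeartFiltration C T X)
    (Q : ObjectProperty C) [Q.IsTriangulatedClosed₂] [Q.ContainsZero]
    [Q.IsClosedUnderIsomorphisms]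
    (hF : ∀ i, 1 ≤ i → i ≤ F.n → Q ((F.factor i)⟦F.deg i⟧)) : Q X := by
  suffices ∀ i ≤ F.n, Q (F.obj i) from Q.prop_of_iso F.top (this _ le_rfl)
  intro i hi
  induction i with
  | zero => exact Q.prop_of_isZero F.zero
  | succ i ih =>
    obtain ⟨_, _, _, hD⟩ := F.tri (i + 1) (by lia) hi
    exact Q.ext_of_isTriangulatedClosed₂ _ hD (ih (by lia)) (hF (i + 1) (by lia) hi)

end HeartFiltration

section Tilt

variable {C} {T T' : TStr C} {free tor : Set C}

theorem prop_of_mem_tiltFlatSet (Q : ObjectProperty C) [Q.IsTriangulatedClosed₂]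
    [Q.ContainsZero] [Q.IsClosedUnderIsomorphisms] (hfree : ∀ Y ∈ free, Q Y)
    (htor : ∀ Y ∈ tor, Q (Y⟦(-1 : ℤ)⟧)) {E : C} (hE : E ∈ tiltFlatSet C T free tor) : Q E := by
  obtain ⟨F⟩ := nonempty_heartFiltration T E
  refine F.prop_of_prop_factor Q fun i hi hin => ?_
  rcases hE F i hi hin with h | ⟨hdeg, h⟩ | ⟨hdeg, h⟩
  · exact Q.prop_of_isZero ((shiftFunctor C _).map_isZero h)
  · rw [hdeg]
    exact Q.prop_of_iso ((shiftFunctorZero C ℤ).app _).symm (hfree _ h)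
  · rw [hdeg]
    exact htor _ h

theorem prop_of_mem_tiltSharpSet (Q : ObjectProperty C) [Q.IsTriangulatedClosed₂]
    [Q.ContainsZero] [Q.IsClosedUnderIsomorphisms] (hfree : ∀ Y ∈ free, Q (Y⟦(1 : ℤ)⟧))
    (htor : ∀ Y ∈ tor, Q Y) {E : C} (hE : E ∈ tiltSharpSet C T free tor) : Q E := by
  obtain ⟨F⟩ := nonempty_heartFiltration T E
  refine F.prop_of_prop_factor Q fun i hi hin => ?_
  rcases hE F i hi hin with h | ⟨hdeg, h⟩ | ⟨hdeg, h⟩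
  · exact Q.prop_of_isZero ((shiftFunctor C _).map_isZero h)
  · rw [hdeg]
    exact hfree _ h
  · rw [hdeg]
    exact Q.prop_of_iso ((shiftFunctorZero C ℤ).app _).symm (htor _ h)

theorem P_subset_of_heart_eq_tiltFlatSet (hT' : heart C T' = tiltFlatSet C T free tor)
    (hfree : free ⊆ heart C T) (htor : tor ⊆ heart C T) : T.P ⊆ T'.P := by
  rw [← T.shiftSet_P_zero, TStr.shiftSet_subset_P_iff, hT', neg_zero]
  refine fun E hE => ⟨prop_of_mem_tiltFlatSet (T.toTStructure.ge 0) ?_ ?_ hE⟩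
  · exact fun Y hY => (T.mem_heart_iff.1 (hfree hY)).2.ge
  · intro Y hY
    have := (T.mem_heart_iff.1 (htor hY)).2
    have := T.toTStructure.isGE_shift Y 0 (-1) 1
    exact (T.toTStructure.isGE_of_ge _ 0 1).ge

theorem P_subset_of_heart_eq_tiltSharpSet (hT' : heart C T' = tiltSharpSet C T free tor)
    (hfree : free ⊆ heart C T) (htor : tor ⊆ heart C T) : T'.P ⊆ T.P := by
  rw [← T.shiftSet_P_zero, TStr.P_subset_shiftSet_iff, hT', neg_zero]
  refine fun E hE => ⟨prop_of_mem_tiltSharpSet (T.toTStructure.le 0) ?_ ?_ hE⟩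
  · intro Y hY
    have := (T.mem_heart_iff.1 (hfree hY)).1
    have := T.toTStructure.isLE_shift Y 0 1 (-1)
    exact (T.toTStructure.isLE_of_le _ (-1) 0).le
  · exact fun Y hY => (T.mem_heart_iff.1 (htor hY)).1.le

theorem isLE_neg_one_of_heart_eq_tiltFlatSet (hT' : heart C T' = tiltFlatSet C T free tor)
    (hfree : free ⊆ heart C T) (htor : tor ⊆ heart C T) {A : C} (hA : A ∈ heart C T)
    (hAfree : ∀ Y ∈ free, ∀ f : A ⟶ Y, f = 0) : T'.toTStructure.IsLE A (-1) := by
  have := (T.mem_heart_iff.1 hA).1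
  have := T'.mem_P_iff.1 (P_subset_of_heart_eq_tiltFlatSet hT' hfree htor (T.mem_P_iff.2 this))
  refine isLE_of_hom_eq_zero _ (-1) 0 (by lia) fun M f hM₁ hM₂ => ?_
  have hM : M ∈ tiltFlatSet C T free tor := hT' ▸ T'.mem_heart_iff.2 ⟨hM₁, hM₂⟩
  refine prop_of_mem_tiltFlatSet (ObjectProperty.singleton A).rightOrthogonal ?_ ?_ hM f (by simp)
  · rintro Y hY _ f ⟨⟩
    exact hAfree Y hY f
  · rintro Y hY _ f ⟨⟩
    have := (T.mem_heart_iff.1 (htor hY)).2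
    have := T.toTStructure.isGE_shift Y 0 (-1) 1
    exact T.toTStructure.zero f 0 1

theorem isGE_one_of_heart_eq_tiltSharpSet (hT' : heart C T' = tiltSharpSet C T free tor)
    (hfree : free ⊆ heart C T) (htor : tor ⊆ heart C T) {A : C} (hA : A ∈ heart C T)
    (hAtor : ∀ Y ∈ tor, ∀ f : Y ⟶ A, f = 0) : T'.toTStructure.IsGE A 1 := by
  have := (T.mem_heart_iff.1 hA).2
  have hP := P_subset_of_heart_eq_tiltSharpSet hT' hfree htor
  rw [← T'.shiftSet_P_zero, TStr.shiftSet_subset_P_iff_ge_le_ge, neg_zero] at hP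
  have : T'.toTStructure.IsGE A 0 := ⟨hP A this.ge⟩
  refine isGE_of_hom_eq_zero _ 0 1 (by lia) fun M f hM₁ hM₂ => ?_
  have hM : M ∈ tiltSharpSet C T free tor := hT' ▸ T'.mem_heart_iff.2 ⟨hM₁, hM₂⟩
  refine prop_of_mem_tiltSharpSet (ObjectProperty.singleton A).leftOrthogonal ?_ ?_ hM f (by simp)
  · rintro Y hY _ f ⟨⟩
    have := (T.mem_heart_iff.1 (hfree hY)).1
    have := T.toTStructure.isLE_shift Y 0 1 (-1)
    exact T.toTStructure.zero f (-1) 0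
  · rintro Y hY _ f ⟨⟩
    exact hAtor Y hY f

theorem P_subset_shiftSet_iff_of_heart_eq_tiltFlatSet {T₀ : TStr C} {m : ℤ}
    (hT' : heart C T' = tiltFlatSet C T free tor)
    (hfree : free ⊆ heart C T) (htor : tor ⊆ heart C T)
    (hom_zero : ∀ A ∈ tor, ∀ Y ∈ free, ∀ f : A ⟶ Y, f = 0) (hT : T.P ⊆ shiftSet C T₀.P m) :
    T'.P ⊆ shiftSet C T₀.P m ↔ ∀ A ∈ tor, T₀.toTStructure.IsLE A (-m - 1) := by
  constructor
  · intro h A hA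
    have := isLE_neg_one_of_heart_eq_tiltFlatSet hT' hfree htor (htor hA) (hom_zero A hA)
    have := (T₀.mem_shiftSet_P_iff m).1
      (h (T'.mem_P_iff.2 (T'.toTStructure.isLE_shift A (-1) (-1) 0)))
    exact T₀.toTStructure.isLE_of_shift A (-m - 1) (-1) (-m)
  · rw [TStr.P_subset_shiftSet_iff, hT'] at *
    refine fun h E hE => ⟨prop_of_mem_tiltFlatSet (T₀.toTStructure.le (-m)) ?_ ?_ hE⟩
    · exact fun Y hY => (hT Y (hfree hY)).le
    · intro A hA
      have := h A hA
      exact (T₀.toTStructure.isLE_shift A (-m - 1) (-1) (-m)).le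

theorem shiftSet_subset_P_iff_of_heart_eq_tiltSharpSet {T₀ : TStr C} {m : ℤ}
    (hT' : heart C T' = tiltSharpSet C T free tor)
    (hfree : free ⊆ heart C T) (htor : tor ⊆ heart C T)
    (hom_zero : ∀ A ∈ free, ∀ Y ∈ tor, ∀ f : Y ⟶ A, f = 0) (hT : shiftSet C T₀.P m ⊆ T.P) :
    shiftSet C T₀.P m ⊆ T'.P ↔ ∀ A ∈ free, T₀.toTStructure.IsGE A (-m + 1) := by
  rw [TStr.shiftSet_subset_P_iff] at hT
  constructor
  · intro h A hA
    have := isGE_one_of_heart_eq_tiltSharpSet hT' hfree htor (hfree hA) (hom_zero A hA)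
    have : T₀.toTStructure.IsGE (A⟦(1 : ℤ)⟧) (-m) :=
      ⟨TStr.shiftSet_subset_P_iff_ge_le_ge.1 h _ (T'.toTStructure.isGE_shift A 1 1 0).ge⟩
    exact T₀.toTStructure.isGE_of_shift A (-m + 1) 1 (-m)
  · rw [TStr.shiftSet_subset_P_iff, hT']
    refine fun h E hE => ⟨prop_of_mem_tiltSharpSet (T₀.toTStructure.ge (-m)) ?_ ?_ hE⟩
    · intro A hA
      have := h A hA
      exact (T₀.toTStructure.isGE_shift A (-m + 1) 1 (-m)).ge
    · exact fun Y hY => (hT Y (htor hY)).ge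

end Tilt

section DirectSums

variable {C} [HasFiniteBiproducts C] {S : C}

omit [HasZeroObject C] [HasShift C ℤ] [∀ n : ℤ, (shiftFunctor C n).Additive]
  [Pretriangulated C] in
theorem self_mem_addObj : S ∈ addObj C S :=
  ⟨1, ⟨(biproductUniqueIso fun _ : Fin 1 => S).symm⟩⟩

theorem prop_of_mem_addObj (Q : ObjectProperty C) [Q.IsTriangulatedClosed₂] [Q.ContainsZero]
    [Q.IsClosedUnderIsomorphisms] (hS : Q S) {A : C} (hA : A ∈ addObj C S) : Q A := by
  obtain ⟨n, ⟨e⟩⟩ := hA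
  have : Q.IsClosedUnderBinaryProducts := by
    refine ⟨fun X ⟨p⟩ => ?_⟩
    have hprod : Q (p.diag.obj (.mk .left) ⨯ p.diag.obj (.mk .right)) :=
      Q.ext_of_isTriangulatedClosed₂ _ (binaryProductTriangle_distinguished _ _)
        (p.prop_diag_obj (.mk .left)) (p.prop_diag_obj (.mk .right))
    exact Q.prop_of_iso ((prodIsProd _ _).conePointUniqueUpToIso
      ((IsLimit.postcomposeHomEquiv (diagramIsoPair p.diag) _).2 p.isLimit)) hprod
  have : Q.IsClosedUnderFiniteProducts := .mk'
  exact Q.prop_of_iso e.symm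
    (Q.prop_of_isLimit_fan (biproduct.isLimit fun _ : Fin n => S) fun _ => hS)

theorem addObj_subset_heart {T : TStr C} (hS : S ∈ heart C T) : addObj C S ⊆ heart C T :=
  fun _ hA => T.mem_heart_iff.2
    ⟨⟨prop_of_mem_addObj (T.toTStructure.le 0) (T.mem_heart_iff.1 hS).1.le hA⟩,
      ⟨prop_of_mem_addObj (T.toTStructure.ge 0) (T.mem_heart_iff.1 hS).2.ge hA⟩⟩

theorem hom_eq_zero_of_source_mem_addObj {A Y : C} (hA : A ∈ addObj C S)
    (hS : ∀ f : S ⟶ Y, f = 0) (f : A ⟶ Y) : f = 0 := by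
  refine prop_of_mem_addObj (ObjectProperty.singleton Y).leftOrthogonal ?_ hA f (by simp)
  rintro _ f ⟨⟩
  exact hS f

theorem hom_eq_zero_of_target_mem_addObj {A Y : C} (hA : A ∈ addObj C S)
    (hS : ∀ f : Y ⟶ S, f = 0) (f : Y ⟶ A) : f = 0 := by
  refine prop_of_mem_addObj (ObjectProperty.singleton Y).rightOrthogonal ?_ hA f (by simp)
  rintro _ f ⟨⟩
  exact hS f

end DirectSums

section FiniteLength

variable {C}

/-- The finite iterated extensions of objects satisfying `A`, built up from zero by adding one
quotient in `A` at a time. -/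
inductive IteratedExtension (A : C → Prop) : C → Prop
  | zero {X : C} (hX : IsZero X) : IteratedExtension A X
  | extension {X Y Z : C} (f : X ⟶ Y) (g : Y ⟶ Z) (h : Z ⟶ X⟦(1 : ℤ)⟧)
      (hD : Triangle.mk f g h ∈ distTriang C) (hX : IteratedExtension A X) (hZ : A Z) :
      IteratedExtension A Y

namespace IteratedExtension

variable {A : C → Prop} {X Y : C}

theorem of_iso (e : X ≅ Y) (hX : IteratedExtension A X) : IteratedExtension A Y := by
  cases hX with
  | zero hX => exact .zero (hX.of_iso e.symm)
  | extension f g h hD hX hZ =>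
    obtain ⟨_, _, _, hD'⟩ := exists_distTriang_of_iso hD (Iso.refl _) e (Iso.refl _)
    exact .extension _ _ _ hD' hX hZ

theorem prop (Q : ObjectProperty C) [Q.IsTriangulatedClosed₂] [Q.ContainsZero]
    [Q.IsClosedUnderIsomorphisms] (hQ : ∀ Z, A Z → Q Z) (hX : IteratedExtension A X) : Q X := by
  induction hX with
  | zero hX => exact Q.prop_of_isZero hX
  | extension _ _ _ hD _ hZ ih => exact Q.ext_of_isTriangulatedClosed₂ _ hD ih (hQ _ hZ)

end IteratedExtension

/-- Every object of `H` is a finite iterated extension of simple objects of `H`; unlike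
`FiniteHeart`, this puts no bound on the number of simple objects. -/
def HasFiniteLength (H : Set C) : Prop :=
  ∀ M ∈ H, IteratedExtension (IsSimpleIn C H) M

theorem FiniteHeart.hasFiniteLength {T : TStr C} (hT : FiniteHeart C T) :
    HasFiniteLength (heart C T) := by
  intro M hM
  obtain ⟨m, obj, h_zero, ⟨e⟩, h_ext⟩ := hT.2 M hM
  suffices ∀ i ≤ m, IteratedExtension (IsSimpleIn C (heart C T)) (obj i) from
    (this m le_rfl).of_iso e
  intro i hi
  induction i with
  | zero => exact .zero h_zero
  | succ i ih =>
    obtain ⟨s, f, g, h, hs, hD⟩ := h_ext i (by lia)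
    exact .extension f g h hD (ih (by lia)) hs

instance (Q : ObjectProperty C) [Q.IsTriangulatedClosed₂] [Q.IsClosedUnderIsomorphisms] (m : ℤ) :
    (Q.shift m).IsTriangulatedClosed₂ := .mk' fun D hD h₁ h₃ =>
  Q.ext_of_isTriangulatedClosed₂ _ (Triangle.shift_distinguished D hD m) h₁ h₃

instance (Q : ObjectProperty C) [Q.ContainsZero] [Q.IsClosedUnderIsomorphisms] (m : ℤ) :
    (Q.shift m).ContainsZero :=
  ⟨0, isZero_zero C, Q.prop_of_isZero ((shiftFunctor C m).map_isZero (isZero_zero C))⟩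

theorem IsSimpleIn.shift {T : TStr C} {s : C} (hs : IsSimpleIn C (heart C T) s) (m : ℤ) :
    IsSimpleIn C (shiftSet C (heart C T) m) (s⟦m⟧) := by
  obtain ⟨_, _⟩ := T.mem_heart_iff.1 hs.1
  refine ⟨(T.mem_shiftSet_heart_iff m).2 ⟨T.toTStructure.isLE_shift s 0 m (-m),
    T.toTStructure.isGE_shift s 0 m (-m)⟩,
    fun h => hs.2.1 (IsZero.of_full_of_faithful_of_isZero (shiftFunctor C m) s h), ?_⟩
  intro A B f g w hA hB hD
  obtain ⟨f', g', w', hD'⟩ :=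
    exists_distTriang_of_iso (Triangle.shift_distinguished _ hD (-m)) (Iso.refl _)
      ((shiftFunctorCompIsoId C m (-m) (by simp)).app s) (Iso.refl _)
  exact (hs.2.2 _ _ f' g' w' hA hB hD').imp
    (IsZero.of_full_of_faithful_of_isZero (shiftFunctor C (-m)) A)
    (IsZero.of_full_of_faithful_of_isZero (shiftFunctor C (-m)) B)

theorem HasFiniteLength.prop_of_mem_shiftSet {T : TStr C} (hT : HasFiniteLength (heart C T))
    {m : ℤ} (Q : ObjectProperty C) [Q.IsTriangulatedClosed₂] [Q.ContainsZero]
    [Q.IsClosedUnderIsomorphisms]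
    (hQ : ∀ s, IsSimpleIn C (shiftSet C (heart C T) m) s → Q s)
    {M : C} (hM : M ∈ shiftSet C (heart C T) m) : Q M := by
  have := (hT _ hM).prop (Q.shift m) fun s hs => hQ _ (hs.shift m)
  exact Q.prop_of_iso ((shiftFunctorCompIsoId C (-m) m (by simp)).app M) this

theorem HasFiniteLength.isLE_iff_forall_simple {T : TStr C} (hT : HasFiniteLength (heart C T))
    {m : ℤ} {S : C} [T.toTStructure.IsLE S (-m)] :
    T.toTStructure.IsLE S (-m - 1) ↔
      ∀ s, IsSimpleIn C (shiftSet C (heart C T) m) s → ∀ f : S ⟶ s, f = 0 := by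
  constructor
  · intro _ s hs f
    have := ((T.mem_shiftSet_heart_iff m).1 hs.1).2
    exact T.toTStructure.zero f (-m - 1) (-m)
  · refine fun h => isLE_of_hom_eq_zero _ (-m - 1) (-m) (by lia) fun M f hM₁ hM₂ => ?_
    refine hT.prop_of_mem_shiftSet (ObjectProperty.singleton S).rightOrthogonal ?_
      ((T.mem_shiftSet_heart_iff m).2 ⟨hM₁, hM₂⟩) f (by simp)
    rintro s hs _ f ⟨⟩
    exact h s hs f

theorem HasFiniteLength.isGE_iff_forall_simple {T : TStr C} (hT : HasFiniteLength (heart C T))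
    {m : ℤ} {S : C} [T.toTStructure.IsGE S (-m)] :
    T.toTStructure.IsGE S (-m + 1) ↔
      ∀ s, IsSimpleIn C (shiftSet C (heart C T) m) s → ∀ f : s ⟶ S, f = 0 := by
  constructor
  · intro _ s hs f
    have := ((T.mem_shiftSet_heart_iff m).1 hs.1).1
    exact T.toTStructure.zero f (-m) (-m + 1)
  · refine fun h => isGE_of_hom_eq_zero _ (-m) (-m + 1) rfl fun M f hM₁ hM₂ => ?_
    refine hT.prop_of_mem_shiftSet (ObjectProperty.singleton S).leftOrthogonal ?_
      ((T.mem_shiftSet_heart_iff m).2 ⟨hM₁, hM₂⟩) f (by simp)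
    rintro s hs _ f ⟨⟩
    exact h s hs f

end FiniteLength

section SimpleTilt

variable {C} [HasFiniteBiproducts C] {T₀ T T' : TStr C} {S : C} {m : ℤ}

theorem P_subset_of_heart_eq_simpleFlatSet (hT' : heart C T' = simpleFlatSet C T S)
    (hS : S ∈ heart C T) : T.P ⊆ T'.P :=
  P_subset_of_heart_eq_tiltFlatSet hT' (Set.sep_subset _ _) (addObj_subset_heart hS)

theorem P_subset_of_heart_eq_simpleSharpSet (hT' : heart C T' = simpleSharpSet C T S)
    (hS : S ∈ heart C T) : T'.P ⊆ T.P :=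
  P_subset_of_heart_eq_tiltSharpSet hT' (addObj_subset_heart hS) (Set.sep_subset _ _)

theorem P_subset_shiftSet_iff_of_heart_eq_simpleFlatSet
    (hT' : heart C T' = simpleFlatSet C T S) (hS : S ∈ heart C T)
    (hT : T.P ⊆ shiftSet C T₀.P m) :
    T'.P ⊆ shiftSet C T₀.P m ↔ T₀.toTStructure.IsLE S (-m - 1) :=
  (P_subset_shiftSet_iff_of_heart_eq_tiltFlatSet hT' (Set.sep_subset _ _)
    (addObj_subset_heart hS) (fun _ hA _ hY => hom_eq_zero_of_source_mem_addObj hA hY.2) hT).trans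
    ⟨fun h => h S self_mem_addObj,
      fun h _ hA => ⟨prop_of_mem_addObj (T₀.toTStructure.le (-m - 1)) h.le hA⟩⟩

theorem shiftSet_subset_P_iff_of_heart_eq_simpleSharpSet
    (hT' : heart C T' = simpleSharpSet C T S) (hS : S ∈ heart C T)
    (hT : shiftSet C T₀.P m ⊆ T.P) :
    shiftSet C T₀.P m ⊆ T'.P ↔ T₀.toTStructure.IsGE S (-m + 1) :=
  (shiftSet_subset_P_iff_of_heart_eq_tiltSharpSet hT' (addObj_subset_heart hS)
    (Set.sep_subset _ _) (fun _ hA _ hY => hom_eq_zero_of_target_mem_addObj hA hY.2) hT).trans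
    ⟨fun h => h S self_mem_addObj,
      fun h _ hA => ⟨prop_of_mem_addObj (T₀.toTStructure.ge (-m + 1)) h.ge hA⟩⟩

end SimpleTilt

theorem statement_13_general [HasFiniteBiproducts C] {T₀ T : TStr C}
    (hlen : HasFiniteLength (heart C T₀)) {a b : ℤ}
    (hint : T.P ⊆ shiftSet C T₀.P a ∧ shiftSet C T₀.P b ⊆ T.P)
    {S : C} (hS : S ∈ heart C T) {Tsharp Tflat : TStr C}
    (hsh : heart C Tsharp = simpleSharpSet C T S)
    (hfl : heart C Tflat = simpleFlatSet C T S) :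
    ((Tflat.P ⊆ shiftSet C T₀.P a ∧ shiftSet C T₀.P b ⊆ Tflat.P) ↔
      ∀ T' : C, IsSimpleIn C (shiftSet C (heart C T₀) a) T' → ∀ f : S ⟶ T', f = 0) ∧
    ((Tsharp.P ⊆ shiftSet C T₀.P a ∧ shiftSet C T₀.P b ⊆ Tsharp.P) ↔
      ∀ T' : C, IsSimpleIn C (shiftSet C (heart C T₀) b) T' → ∀ f : T' ⟶ S, f = 0) := by
  have hLE : T₀.toTStructure.IsLE S (-a) := TStr.P_subset_shiftSet_iff.1 hint.1 S hS
  have hGE : T₀.toTStructure.IsGE S (-b) := TStr.shiftSet_subset_P_iff.1 hint.2 S hS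
  have hflat : shiftSet C T₀.P b ⊆ Tflat.P :=
    hint.2.trans (P_subset_of_heart_eq_simpleFlatSet hfl hS)
  have hsharp : Tsharp.P ⊆ shiftSet C T₀.P a :=
    (P_subset_of_heart_eq_simpleSharpSet hsh hS).trans hint.1
  rw [and_iff_left hflat, P_subset_shiftSet_iff_of_heart_eq_simpleFlatSet hfl hS hint.1,
    hlen.isLE_iff_forall_simple, and_iff_right hsharp,
    shiftSet_subset_P_iff_of_heart_eq_simpleSharpSet hsh hS hint.2, hlen.isGE_iff_forall_simple]
  exact ⟨Iff.rfl, Iff.rfl⟩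

/-- Let `H0`, `H` be finite hearts with `H0[1] ≤ H ≤ H0[N-1]`
(`N ≥ 2`) and `S` a rigid simple of `H`. Then:
(1) `H0[1] ≤ H^♭_S ≤ H0[N-1]` iff `Hom(S, T') = 0` for every simple `T'` of `H0[1]`;
(2) `H0[1] ≤ H^♯_S ≤ H0[N-1]` iff `Hom(T', S) = 0` for every simple `T'` of `H0[N-1]`. -/
theorem statement_13 (k : Type*) [Field k] [IsAlgClosed k] [Linear k C]
    [∀ X Y : C, FiniteDimensional k (X ⟶ Y)] [HasFiniteBiproducts C]
    (T0 T : TStr C) (hfin0 : FiniteHeart C T0) (hfin : FiniteHeart C T)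
    (N : ℤ) (hN : 2 ≤ N)
    (hint : T.P ⊆ shiftSet C T0.P 1 ∧ shiftSet C T0.P (N - 1) ⊆ T.P)
    (S : C) (hS : IsSimpleIn C (heart C T) S)
    (hrigid : ∀ f : S ⟶ S⟦(1 : ℤ)⟧, f = 0)
    (Tsharp Tflat : TStr C)
    (hsh : heart C Tsharp = simpleSharpSet C T S)
    (hfl : heart C Tflat = simpleFlatSet C T S) :
    ((Tflat.P ⊆ shiftSet C T0.P 1 ∧ shiftSet C T0.P (N - 1) ⊆ Tflat.P) ↔
      ∀ T' : C, IsSimpleIn C (shiftSet C (heart C T0) 1) T' → ∀ f : S ⟶ T', f = 0) ∧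
    ((Tsharp.P ⊆ shiftSet C T0.P 1 ∧ shiftSet C T0.P (N - 1) ⊆ Tsharp.P) ↔
      ∀ T' : C, IsSimpleIn C (shiftSet C (heart C T0) (N - 1)) T' →
        ∀ f : T' ⟶ S, f = 0) :=
  statement_13_general C hfin0.hasFiniteLength hint hS.1 hsh hfl

end Paper
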